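/- Let n be an odd positive integer and 1/2 ≤ p ≤ 1. Then the majority-cheating probability grows with the number of workers: P_C(n+2,p) ≥ P_C(n,p). -/

import Mathlib

/-- The probability that a strict majority of `n` independent workers cheat,
when each cheats independently with probability `p`. -/
noncomputable def majProb (n : ℕ) (p : ℝ) : ℝ :=
  ∑ k ∈ Finset.Icc ((n + 1) / 2) n, (n.choose k : ℝ) * p ^ k * (1 - p) ^ (n - k)

/-!
The value of `bernsteinPolynomial ℝ n k` at `p` is the probability that exactly `k` of `n` workers
cheat. Two additional workers turn a minority of cheaters into a majority only if exactly `m` of the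
first `2 * m + 1` cheat and both newcomers cheat, and a majority into a minority only if exactly
`m + 1` of them cheat and neither newcomer does. Since
`(2 * m + 1).choose m = (2 * m + 1).choose (m + 1)`, the first event is more likely than the second
by `(2 * m + 1).choose m * (p * (1 - p)) ^ (m + 1) * (p - (1 - p))`.
-/

open Finset Polynomial

section BernsteinPolynomial

variable (R : Type*) [CommRing R]

lemma bernsteinPolynomial_succ_zero (n : ℕ) :
    bernsteinPolynomial R (n + 1) 0 = (1 - X) * bernsteinPolynomial R n 0 := by
  simp [bernsteinPolynomial, pow_succ']

lemma bernsteinPolynomial_succ_succ (n k : ℕ) :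
    bernsteinPolynomial R (n + 1) (k + 1) =
      X * bernsteinPolynomial R n k + (1 - X) * bernsteinPolynomial R n (k + 1) := by
  rcases lt_or_ge k n with hkn | hnk
  · have h_sub : n - k = n - (k + 1) + 1 := by lia
    simp only [bernsteinPolynomial, Nat.choose_succ_succ', Nat.add_sub_add_right, h_sub]
    push_cast
    ring
  · have h_choose : n.choose (k + 1) = 0 := Nat.choose_eq_zero_of_lt (Nat.lt_succ_of_le hnk)
    simp only [bernsteinPolynomial, Nat.choose_succ_succ', Nat.add_sub_add_right, h_choose]
    push_cast
    ring

lemma sum_range_bernsteinPolynomial_succ (n j : ℕ) :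
    ∑ k ∈ range (j + 1), bernsteinPolynomial R (n + 1) k =
      ∑ k ∈ range (j + 1), bernsteinPolynomial R n k - X * bernsteinPolynomial R n j := by
  induction j with
  | zero =>
    simp only [zero_add, sum_range_one, bernsteinPolynomial_succ_zero]
    ring
  | succ j ih =>
    rw [sum_range_succ, ih, bernsteinPolynomial_succ_succ, sum_range_succ _ (j + 1)]
    ring

lemma sum_range_bernsteinPolynomial_add_two (n j : ℕ) :
    ∑ k ∈ range (j + 2), bernsteinPolynomial R (n + 2) k =
      ∑ k ∈ range (j + 1), bernsteinPolynomial R n k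
        - X ^ 2 * bernsteinPolynomial R n j + (1 - X) ^ 2 * bernsteinPolynomial R n (j + 1) := by
  rw [sum_range_bernsteinPolynomial_succ, sum_range_succ, sum_range_bernsteinPolynomial_succ,
    bernsteinPolynomial_succ_succ]
  ring

lemma sum_range_bernsteinPolynomial_two_mul_add_three (m : ℕ) :
    ∑ k ∈ range (m + 2), bernsteinPolynomial R (2 * m + 3) k =
      ∑ k ∈ range (m + 1), bernsteinPolynomial R (2 * m + 1) k
        - ((2 * m + 1).choose m : R[X]) * (X * (1 - X)) ^ (m + 1) * (2 * X - 1) := by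
  have h_minority : bernsteinPolynomial R (2 * m + 1) m =
      ((2 * m + 1).choose m : R[X]) * X ^ m * (1 - X) ^ (m + 1) := by
    rw [bernsteinPolynomial, show 2 * m + 1 - m = m + 1 by lia]
  have h_majority : bernsteinPolynomial R (2 * m + 1) (m + 1) =
      ((2 * m + 1).choose m : R[X]) * X ^ (m + 1) * (1 - X) ^ m := by
    rw [bernsteinPolynomial, Nat.choose_symm_half, show 2 * m + 1 - (m + 1) = m by lia]
  rw [sum_range_bernsteinPolynomial_add_two, h_minority, h_majority, mul_pow]
  ring

end BernsteinPolynomial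

lemma majProb_eq_one_sub_eval (m : ℕ) (p : ℝ) :
    majProb (2 * m + 1) p =
      1 - (∑ k ∈ range (m + 1), bernsteinPolynomial ℝ (2 * m + 1) k).eval p := by
  have h_tail : majProb (2 * m + 1) p =
      (∑ k ∈ Ico (m + 1) (2 * m + 1 + 1), bernsteinPolynomial ℝ (2 * m + 1) k).eval p := by
    simp [majProb, bernsteinPolynomial, eval_finsetSum, ← Ico_add_one_right_eq_Icc,
      show (2 * m + 1 + 1) / 2 = m + 1 by lia]
  have h_total := sum_range_add_sum_Ico (bernsteinPolynomial ℝ (2 * m + 1))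
    (show m + 1 ≤ 2 * m + 1 + 1 by lia)
  rw [bernsteinPolynomial.sum] at h_total
  rw [h_tail, eq_sub_iff_add_eq', ← eval_add, h_total, eval_one]

lemma majProb_two_mul_add_three (m : ℕ) (p : ℝ) :
    majProb (2 * m + 3) p = majProb (2 * m + 1) p +
      ((2 * m + 1).choose m : ℝ) * (p * (1 - p)) ^ (m + 1) * (2 * p - 1) :=
  calc
    majProb (2 * m + 3) p
      = 1 - (∑ k ∈ range (m + 2), bernsteinPolynomial ℝ (2 * m + 3) k).eval p :=
        majProb_eq_one_sub_eval (m + 1) p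
    _ = 1 - (∑ k ∈ range (m + 1), bernsteinPolynomial ℝ (2 * m + 1) k).eval p +
          ((2 * m + 1).choose m : ℝ) * (p * (1 - p)) ^ (m + 1) * (2 * p - 1) := by
        rw [sum_range_bernsteinPolynomial_two_mul_add_three]
        simp only [eval_sub, eval_mul, eval_pow, eval_natCast, eval_ofNat, eval_X, eval_one]
        ring
    _ = majProb (2 * m + 1) p +
          ((2 * m + 1).choose m : ℝ) * (p * (1 - p)) ^ (m + 1) * (2 * p - 1) := by
        rw [majProb_eq_one_sub_eval]

theorem majProb_add_two_ge (n : ℕ) (hn : Odd n) (hpos : 0 < n)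
    (p : ℝ) (hp : 1 / 2 ≤ p) (hp1 : p ≤ 1) :
    majProb n p ≤ majProb (n + 2) p := by
  obtain ⟨m, rfl⟩ := hn
  have h_bias : 0 ≤ 2 * p - 1 := by linarith
  have h_balanced : 0 ≤ p * (1 - p) := mul_nonneg (by linarith) (sub_nonneg.2 hp1)
  rw [majProb_two_mul_add_three]
  exact le_add_of_nonneg_right
    (mul_nonneg (mul_nonneg (Nat.cast_nonneg _) (pow_nonneg h_balanced _)) h_bias)
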